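/- arXiv:0911.5148 — 2 statements merged into one kernel-verified Lean document; each statement's English description precedes it below -/
import Mathlib

section
/- Let s ∈ (0, 1/2], ε₁ > 0, T > 0 and K > 0, and let θ be a classical solution of the regularized fractional Burgers equation with viscosity ε₁ on ℝ × (0,T] such that: ‖θ(·,t)‖_{L²(ℝ)} ≤ K for all t ∈ (0,T]; for each t ∈ (0,T], θ(x,t) → 0 as x → ±∞ uniformly for t in compact subsets of (0,T]; and t^{1/(4s)} θ(x,t) → 0 as t → 0⁺ uniformly in x. Then there exists a constant C(s) > 0 depending only on s such that sup_{x ∈ ℝ} |θ(x,t)| ≤ C(s) t^{−1/(4s)} K for every t ∈ (0,T]. -/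
open MeasureTheory Real Set Filter

/-- The normalizing constant of the 1-D fractional Laplacian. -/
noncomputable def fracC (s : ℝ) : ℝ :=
  (4 : ℝ) ^ s * Real.Gamma (1 / 2 + s) / (Real.sqrt Real.pi * |Real.Gamma (-s)|)

/-- The fractional Laplacian `(-Δ)^s u (x)`. -/
noncomputable def fracLap (s : ℝ) (u : ℝ → ℝ) (x : ℝ) : ℝ :=
  fracC s * ∫ y : ℝ, (u x - u y) / |x - y| ^ (1 + 2 * s)

/-- A classical solution of the regularized fractional Burgers equation
`θ_t + θ θ_x + (-Δ)^s θ - ε₁ θ_xx = 0` on a set `D ⊆ ℝ × ℝ` (points written `(x, t)`):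
a bounded continuous function, continuously differentiable in `t` and twice continuously
differentiable in `x`, satisfying the equation at every point of `D`, where the fractional
Laplacian (acting in `x`) is given by an absolutely convergent integral. -/
structure IsClassicalSolution (s ε₁ : ℝ) (θ : ℝ → ℝ → ℝ) (D : Set (ℝ × ℝ)) : Prop where
  bounded : ∃ B : ℝ, ∀ p ∈ D, |θ p.1 p.2| ≤ B
  cont : ContinuousOn (fun p : ℝ × ℝ => θ p.1 p.2) D
  diff_t : ∀ p ∈ D, DifferentiableAt ℝ (fun t => θ p.1 t) p.2
  cont_dt : ContinuousOn (fun p : ℝ × ℝ => deriv (fun t => θ p.1 t) p.2) D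
  diff_x : ∀ p ∈ D, DifferentiableAt ℝ (fun x => θ x p.2) p.1
  diff_xx : ∀ p ∈ D, DifferentiableAt ℝ (deriv fun x => θ x p.2) p.1
  cont_dx : ContinuousOn (fun p : ℝ × ℝ => deriv (fun x => θ x p.2) p.1) D
  cont_dxx : ContinuousOn (fun p : ℝ × ℝ => deriv (deriv fun x => θ x p.2) p.1) D
  integrable : ∀ p ∈ D,
    Integrable fun y : ℝ => (θ p.1 p.2 - θ y p.2) / |p.1 - y| ^ (1 + 2 * s)
  eqn : ∀ p ∈ D,
    deriv (fun t => θ p.1 t) p.2 + θ p.1 p.2 * deriv (fun x => θ x p.2) p.1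
      + fracLap s (fun x => θ x p.2) p.1
      - ε₁ * deriv (deriv fun x => θ x p.2) p.1 = 0

theorem fracC_pos {s : ℝ} (hs : 0 < s) (hs1 : s < 1) : 0 < fracC s := by
  have hG : Real.Gamma (-s) ≠ 0 := by
    refine Real.Gamma_ne_zero fun m hm => ?_
    have hm' : s = (m : ℝ) := by linarith
    rw [hm'] at hs hs1
    have h0 : 0 < m := by exact_mod_cast hs
    have h1 : m < 1 := by exact_mod_cast hs1
    omega
  have h1 : 0 < Real.Gamma (1 / 2 + s) := Real.Gamma_pos_of_pos (by linarith)
  unfold fracC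
  positivity

theorem fracLap_const_mul (s σ : ℝ) (u : ℝ → ℝ) (x : ℝ) :
    fracLap s (fun y => σ * u y) x = σ * fracLap s u x := by
  unfold fracLap
  have h : (∫ y, (σ * u x - σ * u y) / |x - y| ^ (1 + 2 * s)) =
      σ * ∫ y, (u x - u y) / |x - y| ^ (1 + 2 * s) := by
    rw [← integral_const_mul]
    refine integral_congr_ae (Eventually.of_forall fun y => ?_)
    simp only
    ring
  rw [h]
  ring

/-- An `L²` bound on a continuous function, as a bound on the integral of its square. -/
theorem integral_sq_le_of_eLpNorm_le {u : ℝ → ℝ} {K : ℝ} (hK : 0 ≤ K) (hu : Continuous u)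
    (h : eLpNorm u 2 volume ≤ ENNReal.ofReal K) :
    Integrable (fun y => u y ^ 2) ∧ ∫ y, u y ^ 2 ≤ K ^ 2 := by
  have hmem : MemLp u 2 volume :=
    ⟨hu.aestronglyMeasurable, h.trans_lt ENNReal.ofReal_lt_top⟩
  refine ⟨hmem.integrable_sq, ?_⟩
  rw [hmem.eLpNorm_eq_integral_rpow_norm (by norm_num) (by norm_num),
    ENNReal.ofReal_le_ofReal_iff hK] at h
  have h0 : 0 ≤ ∫ y, u y ^ 2 := integral_nonneg fun y => sq_nonneg _
  have h1 : (∫ y, ‖u y‖ ^ (2 : ENNReal).toReal) = ∫ y, u y ^ 2 := by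
    congr 1
    ext y
    simp
  rw [h1] at h
  have h2 : (∫ y, u y ^ 2) ^ ((2 : ENNReal).toReal)⁻¹ = √(∫ y, u y ^ 2) := by
    rw [Real.sqrt_eq_rpow]
    norm_num
  rw [h2] at h
  exact (Real.sqrt_le_left hK).1 h

/-- Nonlinear lower bound for the fractional Laplacian at a positive maximum point of a function
with an `L²` bound. -/
theorem le_fracLap_of_isMax {s K x₀ : ℝ} {u : ℝ → ℝ} (hs : 0 < s) (hs1 : s < 1) (hK : 0 < K)
    (hu : Continuous u) (hL2 : eLpNorm u 2 volume ≤ ENNReal.ofReal K)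
    (hint : Integrable fun y : ℝ => (u x₀ - u y) / |x₀ - y| ^ (1 + 2 * s))
    (hmax : ∀ y, u y ≤ u x₀) (hpos : 0 < u x₀) :
    fracC s * (u x₀ / 2 * (K ^ 2 / u x₀ ^ 2) ^ (-(2 * s))) ≤ fracLap s u x₀ := by
  obtain ⟨hsqi, hsq⟩ := integral_sq_le_of_eLpNorm_le hK.le hu hL2
  refine mul_le_mul_of_nonneg_left ?_ (fracC_pos hs hs1).le
  set M := u x₀ with hM
  set r := K ^ 2 / M ^ 2 with hr
  have hr0 : 0 < r := by positivity
  have hp : 0 < r ^ (1 + 2 * s) := rpow_pos_of_pos hr0 _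
  have hsqI : ∫ y in Icc (x₀ - r) (x₀ + r), u y ^ 2 ≤ K ^ 2 :=
    (setIntegral_le_integral hsqi (Eventually.of_forall fun y => sq_nonneg _)).trans hsq
  calc M / 2 * r ^ (-(2 * s))
      = (M * r - K ^ 2 / (2 * M)) / r ^ (1 + 2 * s) := by
        rw [rpow_neg hr0.le, rpow_add hr0, rpow_one]
        have : 0 < r ^ (2 * s) := rpow_pos_of_pos hr0 _
        have hK2 : K ^ 2 = r * M ^ 2 := by rw [hr]; field_simp
        rw [hK2]
        field_simp
        ring
    _ ≤ (M * r - (∫ y in Icc (x₀ - r) (x₀ + r), u y ^ 2) / (2 * M)) / r ^ (1 + 2 * s) := by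
        gcongr
    _ = ∫ y in Icc (x₀ - r) (x₀ + r), (M / 2 - u y ^ 2 / (2 * M)) / r ^ (1 + 2 * s) := by
        rw [integral_div, integral_sub (by simp) (hsqi.integrableOn.div_const _),
          integral_div (2 * M)]
        simp only [integral_const, measureReal_restrict_apply MeasurableSet.univ, univ_inter,
          Real.volume_real_Icc_of_le (by linarith : x₀ - r ≤ x₀ + r), smul_eq_mul]
        ring
    _ ≤ ∫ y in Icc (x₀ - r) (x₀ + r), (M - u y) / |x₀ - y| ^ (1 + 2 * s) := by
        refine setIntegral_mono_on ?_ hint.integrableOn measurableSet_Icc fun y hy => ?_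
        · exact ((integrableOn_const (by simp)).sub (hsqi.integrableOn.div_const _)).div_const _
        have hle : M / 2 - u y ^ 2 / (2 * M) ≤ M - u y := by
          have h : M - u y - (M / 2 - u y ^ 2 / (2 * M)) = (M - u y) ^ 2 / (2 * M) := by
            field_simp
            ring
          have : 0 ≤ (M - u y) ^ 2 / (2 * M) := by positivity
          linarith
        refine (div_le_div_of_nonneg_right hle hp.le).trans ?_
        rcases eq_or_ne y x₀ with rfl | hne
        · simp [← hM]
        · have hd : 0 < |x₀ - y| := abs_pos.2 (sub_ne_zero.2 hne.symm)
          have hd' : |x₀ - y| ≤ r := abs_le.2 ⟨by linarith [hy.2], by linarith [hy.1]⟩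
          have : 0 ≤ M - u y := sub_nonneg.2 (hmax y)
          have : 0 < |x₀ - y| ^ (1 + 2 * s) := rpow_pos_of_pos hd _
          gcongr
    _ ≤ ∫ y, (M - u y) / |x₀ - y| ^ (1 + 2 * s) :=
        setIntegral_le_integral hint (Eventually.of_forall fun y =>
          div_nonneg (sub_nonneg.2 (hmax y)) (by positivity))

theorem deriv_deriv_nonpos_of_isLocalMax {f : ℝ → ℝ} {x : ℝ} (hf : ContinuousAt f x)
    (h : IsLocalMax f x) : deriv (deriv f) x ≤ 0 := by
  by_contra! hpos
  have hmin := isLocalMin_of_deriv_deriv_pos hpos h.deriv_eq_zero hf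
  have hc : f =ᶠ[nhds x] fun _ => f x := by
    filter_upwards [h, hmin] with y h1 h2 using le_antisymm h1 h2
  have h2 := hc.deriv.deriv_eq
  simp at h2
  linarith

theorem HasDerivAt.nonneg_of_le_left {g : ℝ → ℝ} {g' t₀ : ℝ} (hg : HasDerivAt g g' t₀)
    (h0 : 0 < t₀) (h : ∀ t, 0 < t → t < t₀ → g t ≤ g t₀) : 0 ≤ g' := by
  have ht := (hasDerivWithinAt_iff_tendsto_slope' (s := Iio t₀) (by simp)).1 hg.hasDerivWithinAt
  refine ge_of_tendsto ht ?_
  filter_upwards [Ioo_mem_nhdsLT h0] with t ht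
  rw [slope_def_field]
  exact div_nonneg_of_nonpos (by linarith [h t ht.1 ht.2]) (by linarith [ht.2])

/-- The differential inequality at a maximum point, solved for the maximum. -/
theorem rpow_mul_le_of_decay {s c M K t : ℝ} (hs : 0 < s) (hc : 0 < c) (hM : 0 < M) (hK : 0 < K)
    (ht : 0 < t)
    (h : c * (M / 2 * (K ^ 2 / M ^ 2) ^ (-(2 * s))) ≤ 1 / (4 * s) / t * M) :
    t ^ (1 / (4 * s)) * M ≤ (2 * (1 / (4 * s)) / c) ^ (1 / (4 * s)) * K := by
  set α := 1 / (4 * s) with hα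
  have hα0 : 0 < α := by positivity
  have h1 : (K ^ 2 / M ^ 2) ^ (-(2 * s)) = (M / K) ^ (4 * s) := by
    rw [rpow_neg (by positivity), ← inv_rpow (by positivity), inv_div, ← div_pow,
      ← rpow_natCast, ← rpow_mul (by positivity)]
    congr 1
    push_cast
    ring
  rw [h1] at h
  have h2 : t * (M / K) ^ (4 * s) ≤ 2 * α / c := by
    rw [le_div_iff₀ hc]
    have h3 := mul_le_mul_of_nonneg_right h (by positivity : 0 ≤ 2 * t / M)
    calc t * (M / K) ^ (4 * s) * c = c * (M / 2 * (M / K) ^ (4 * s)) * (2 * t / M) := by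
          field_simp
      _ ≤ α / t * M * (2 * t / M) := h3
      _ = 2 * α := by field_simp
  have h3 := rpow_le_rpow (by positivity) h2 hα0.le
  rw [mul_rpow ht.le (by positivity), ← rpow_mul (by positivity),
    show 4 * s * α = 1 by rw [hα]; field_simp, rpow_one] at h3
  calc t ^ α * M = t ^ α * (M / K) * K := by field_simp
    _ ≤ _ := by gcongr

/-- The bound at a space-time maximum point of `t ^ (1 / (4 s)) |θ|`. -/
theorem IsClassicalSolution.le_of_isMax {s ε₁ T K x₀ t₀ : ℝ} {θ : ℝ → ℝ → ℝ} (hs : 0 < s)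
    (hs1 : s < 1) (hε : 0 < ε₁) (hK : 0 < K)
    (hθ : IsClassicalSolution s ε₁ θ {p : ℝ × ℝ | 0 < p.2 ∧ p.2 ≤ T})
    (hL2 : eLpNorm (fun x => θ x t₀) 2 volume ≤ ENNReal.ofReal K)
    (h0 : 0 < t₀) (hT : t₀ ≤ T) (hne : θ x₀ t₀ ≠ 0)
    (hmax : ∀ x t, 0 < t → t ≤ T →
      t ^ (1 / (4 * s)) * |θ x t| ≤ t₀ ^ (1 / (4 * s)) * |θ x₀ t₀|) :
    t₀ ^ (1 / (4 * s)) * |θ x₀ t₀| ≤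
      (2 * (1 / (4 * s)) / fracC s) ^ (1 / (4 * s)) * K := by
  set α := 1 / (4 * s) with hα
  obtain ⟨σ, hσ, hσθ⟩ : ∃ σ : ℝ, |σ| = 1 ∧ σ * θ x₀ t₀ = |θ x₀ t₀| := by
    rcases abs_choice (θ x₀ t₀) with h | h
    · exact ⟨1, by simp, by rw [h]; ring⟩
    · exact ⟨-1, by simp, by rw [h]; ring⟩
  have hσle : ∀ x t, σ * θ x t ≤ |θ x t| := fun x t => by
    simpa [abs_mul, hσ] using le_abs_self (σ * θ x t)
  have hMpos : 0 < |θ x₀ t₀| := abs_pos.2 hne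
  have hD : ∀ x, (x, t₀) ∈ {p : ℝ × ℝ | 0 < p.2 ∧ p.2 ≤ T} := fun x => ⟨h0, hT⟩
  have hta : 0 < t₀ ^ α := rpow_pos_of_pos h0 _
  have hxmax : ∀ x, σ * θ x t₀ ≤ σ * θ x₀ t₀ := fun x => by
    rw [hσθ]
    exact (hσle x t₀).trans (le_of_mul_le_mul_left (hmax x t₀ h0 hT) hta)
  have hcont : Continuous fun x => θ x t₀ :=
    continuous_iff_continuousAt.2 fun x => (hθ.diff_x _ (hD x)).continuousAt
  have hlmax : IsLocalMax (fun x => σ * θ x t₀) x₀ := Eventually.of_forall hxmax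
  have hdx : deriv (fun x => θ x t₀) x₀ = 0 := by
    have h := hlmax.deriv_eq_zero
    rw [deriv_const_mul_field] at h
    refine (mul_eq_zero.1 h).resolve_left fun h => ?_
    simp [h] at hσ
  have hdxx : σ * deriv (deriv fun x => θ x t₀) x₀ ≤ 0 := by
    have h := deriv_deriv_nonpos_of_isLocalMax (hcont.const_mul σ).continuousAt hlmax
    have he : deriv (fun x => σ * θ x t₀) = fun x => σ * deriv (fun x => θ x t₀) x := by
      ext x
      exact deriv_const_mul_field _
    rwa [he, deriv_const_mul_field] at h
  have hdt : 0 ≤ α * t₀ ^ (α - 1) * (σ * θ x₀ t₀) +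
      t₀ ^ α * (σ * deriv (fun t => θ x₀ t) t₀) := by
    refine HasDerivAt.nonneg_of_le_left (g := fun t => t ^ α * (σ * θ x₀ t)) (t₀ := t₀)
      ((hasDerivAt_rpow_const (Or.inl h0.ne')).mul
        ((hθ.diff_t _ (hD x₀)).hasDerivAt.const_mul σ)) h0 fun t ht htt => ?_
    simp only [hσθ]
    exact (mul_le_mul_of_nonneg_left (hσle x₀ t) (by positivity)).trans
      (hmax x₀ t ht (htt.le.trans hT))
  have hL2' : eLpNorm (fun x => σ * θ x t₀) 2 volume ≤ ENNReal.ofReal K := by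
    refine (eLpNorm_mono fun x => ?_).trans hL2
    simp [hσ]
  have hint : Integrable fun y : ℝ =>
      (σ * θ x₀ t₀ - σ * θ y t₀) / |x₀ - y| ^ (1 + 2 * s) := by
    refine ((hθ.integrable _ (hD x₀)).const_mul σ).congr (Eventually.of_forall fun y => ?_)
    simp only
    ring
  have hlap := le_fracLap_of_isMax hs hs1 hK (hcont.const_mul σ) hL2' hint hxmax
    (by rw [hσθ]; exact hMpos)
  rw [fracLap_const_mul] at hlap
  simp only [hσθ] at hlap hdt
  have heq := hθ.eqn _ (hD x₀)
  simp only [hdx] at heq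
  refine rpow_mul_le_of_decay hs (fracC_pos hs hs1) hMpos hK h0 (hlap.trans ?_)
  have hdt' : 0 ≤ α / t₀ * |θ x₀ t₀| + σ * deriv (fun t => θ x₀ t) t₀ := by
    rw [rpow_sub_one h0.ne'] at hdt
    refine nonneg_of_mul_nonneg_right (a := t₀ ^ α) ?_ hta
    calc 0 ≤ _ := hdt
      _ = _ := by ring
  have heq' : σ * fracLap s (fun x => θ x t₀) x₀ = - (σ * deriv (fun t => θ x₀ t) t₀) +
      ε₁ * (σ * deriv (deriv fun x => θ x t₀) x₀) := by
    linear_combination σ * heq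
  have := mul_nonpos_of_nonneg_of_nonpos hε.le hdxx
  rw [heq']
  linarith

/-- `L^∞` decay. If `‖θ(·,t)‖_{L²} ≤ K` on `(0,T]`, `θ` vanishes at spatial
infinity uniformly on compact time subsets, and `t^{1/(4s)} θ → 0` as `t → 0⁺` uniformly
in `x`, then `|θ(x,t)| ≤ C(s) t^{-1/(4s)} K`, with `C(s)` depending only on `s`. -/
theorem linfty_decay (s : ℝ) (hs : 0 < s) (hs' : s ≤ 1 / 2) :
    ∃ C : ℝ, 0 < C ∧
      ∀ ε₁ T K : ℝ, ∀ θ : ℝ → ℝ → ℝ, 0 < ε₁ → 0 < T → 0 < K →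
        IsClassicalSolution s ε₁ θ {p : ℝ × ℝ | 0 < p.2 ∧ p.2 ≤ T} →
        (∀ t : ℝ, 0 < t → t ≤ T →
          eLpNorm (fun x => θ x t) 2 volume ≤ ENNReal.ofReal K) →
        (∀ a : ℝ, 0 < a → a ≤ T → ∀ ε : ℝ, 0 < ε →
          ∃ R : ℝ, ∀ x : ℝ, R < |x| → ∀ t ∈ Set.Icc a T, |θ x t| < ε) →
        (∀ ε : ℝ, 0 < ε → ∃ δ : ℝ, 0 < δ ∧
          ∀ t : ℝ, 0 < t → t < δ → t ≤ T → ∀ x : ℝ,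
            t ^ (1 / (4 * s)) * |θ x t| < ε) →
        ∀ t : ℝ, 0 < t → t ≤ T → ∀ x : ℝ,
          |θ x t| ≤ C * t ^ (-(1 / (4 * s))) * K := by
  have hs1 : s < 1 := by linarith
  have hc := fracC_pos hs hs1
  refine ⟨(2 * (1 / (4 * s)) / fracC s) ^ (1 / (4 * s)), by positivity, ?_⟩
  intro ε₁ T K θ hε hT hK hθ hL2 hinf hzero t₁ ht₁ ht₁T x₁
  have hα0 : 0 < 1 / (4 * s) := by positivity
  suffices h : t₁ ^ (1 / (4 * s)) * |θ x₁ t₁| ≤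
      (2 * (1 / (4 * s)) / fracC s) ^ (1 / (4 * s)) * K by
    have hp : 0 < t₁ ^ (1 / (4 * s)) := rpow_pos_of_pos ht₁ _
    rw [rpow_neg ht₁.le, mul_right_comm, ← div_eq_mul_inv, le_div_iff₀ hp, mul_comm]
    exact h
  set α := 1 / (4 * s) with hα
  rcases eq_or_ne (θ x₁ t₁) 0 with hz | hz
  · rw [hz, abs_zero, mul_zero]
    positivity
  have hTα : 0 < T ^ α := rpow_pos_of_pos hT _
  have hm : 0 < t₁ ^ α * |θ x₁ t₁| := mul_pos (rpow_pos_of_pos ht₁ _) (abs_pos.2 hz)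
  obtain ⟨δ, hδ, hsmall⟩ := hzero _ hm
  have hδt : δ ≤ t₁ := by
    by_contra! hlt
    exact lt_irrefl _ (hsmall t₁ ht₁ hlt ht₁T x₁)
  obtain ⟨R, hR⟩ := hinf δ hδ (hδt.trans ht₁T) _ (div_pos hm hTα)
  have hfar : ∀ x, R < |x| → ∀ t ∈ Icc δ T, t ^ α * |θ x t| < t₁ ^ α * |θ x₁ t₁| := by
    intro x hx t ht
    have h := (lt_div_iff₀' hTα).1 (hR x hx t ht)
    refine lt_of_le_of_lt ?_ h
    exact mul_le_mul_of_nonneg_right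
      (rpow_le_rpow (hδ.le.trans ht.1) ht.2 hα0.le) (abs_nonneg _)
  have hx₁ : |x₁| ≤ R := by
    by_contra! hlt
    exact lt_irrefl _ (hfar x₁ hlt t₁ ⟨hδt, ht₁T⟩)
  have hmem : (x₁, t₁) ∈ Icc (-R) R ×ˢ Icc δ T := ⟨abs_le.1 hx₁, hδt, ht₁T⟩
  have hcont : ContinuousOn (fun p : ℝ × ℝ => p.2 ^ α * |θ p.1 p.2|)
      (Icc (-R) R ×ˢ Icc δ T) := by
    refine ContinuousOn.mul (continuousOn_snd.rpow_const fun p _ => Or.inr hα0.le) ?_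
    exact (hθ.cont.mono fun p hp => ⟨hδ.trans_le hp.2.1, hp.2.2⟩).abs
  obtain ⟨⟨x₀, t₀⟩, hp₀, hmax⟩ :=
    (isCompact_Icc.prod isCompact_Icc).exists_isMaxOn ⟨_, hmem⟩ hcont
  have h1 : t₁ ^ α * |θ x₁ t₁| ≤ t₀ ^ α * |θ x₀ t₀| := hmax hmem
  have h0 : 0 < t₀ := hδ.trans_le hp₀.2.1
  refine h1.trans (hθ.le_of_isMax hs hs1 hε hK (hL2 t₀ h0 hp₀.2.2) h0 hp₀.2.2 ?_ ?_)
  · intro h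
    rw [h, abs_zero, mul_zero] at h1
    linarith
  · intro x t ht htT
    rcases lt_or_ge t δ with hlt | hge
    · exact (hsmall t ht hlt htT x).le.trans h1
    rcases lt_or_ge R |x| with hx | hx
    · exact (hfar x hx t ⟨hge, htT⟩).le.trans h1
    · exact hmax (show (x, t) ∈ Icc (-R) R ×ˢ Icc δ T from ⟨abs_le.1 hx, hge, htT⟩)
end

section
/- For every M₀ ≥ 2 and μ > 0 there exist ε₀ > 0 and λ > 0, depending only on μ and M₀, such that the following holds. Let s ∈ [1/4, 1/2], let M be a constant with |M| ≤ M₀, let 0 < ε₁ ≤ 10^{3/2}, and let θ : ℝ × [−2/M₀, 0] → ℝ be bounded and continuous, continuously differentiable in t and twice continuously differentiable in x on [−5,5] × [−2/M₀, 0], with θ ≤ 1 on all of ℝ × [−2/M₀, 0]. Assume θ satisfies the subsolution inequality ∂_t θ + M θ ∂_x θ + (−Δ)^s θ − ε₁ ∂_{xx} θ ≤ ε₀ at every point of [−5,5] × [−2/M₀, 0], and that the Lebesgue measure of the set {(x,t) ∈ [−1,1] × [−2/M₀, −1/M₀] : θ(x,t) ≤ 0} is at least μ. Then θ ≤ 1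 − λ on [−1,1] × [−1/M₀, 0]. -/
open MeasureTheory Real Set Filter

lemma exists_fracC_bounds :
    ∃ c C : ℝ, 0 < c ∧ ∀ s ∈ Icc (1 / 4 : ℝ) (1 / 2), c ≤ fracC s ∧ fracC s ≤ C := by
  have hΓ : ∀ s ∈ Icc (1 / 4 : ℝ) (1 / 2), ∀ n : ℕ, -s ≠ -(n : ℝ) := by
    rintro s ⟨h1, h2⟩ n h
    have h3 : s = n := by linarith
    rcases Nat.eq_zero_or_pos n with rfl | hn
    · norm_num at h3; linarith
    · have : (1 : ℝ) ≤ n := by exact_mod_cast hn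
      linarith
  have hcont : ContinuousOn fracC (Icc (1 / 4 : ℝ) (1 / 2)) := by
    intro s hs
    have h1 : ContinuousAt (fun s : ℝ => Real.Gamma (1 / 2 + s)) s := by
      refine ContinuousAt.comp (g := Real.Gamma) (f := fun s : ℝ => 1 / 2 + s) ?_ (by fun_prop)
      refine (Real.differentiableAt_Gamma fun n h => ?_).continuousAt
      have : (0 : ℝ) ≤ n := n.cast_nonneg
      have := hs.1
      linarith
    have h2 : ContinuousAt (fun s : ℝ => |Real.Gamma (-s)|) s := by
      refine ContinuousAt.abs ?_
      refine ContinuousAt.comp (g := Real.Gamma) (f := fun s : ℝ => -s) ?_ (by fun_prop)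
      exact (Real.differentiableAt_Gamma (hΓ s hs)).continuousAt
    have h3 : ContinuousAt (fun s : ℝ => (4 : ℝ) ^ s) s :=
      (Real.continuous_const_rpow (by norm_num)).continuousAt
    refine ((h3.mul h1).div (continuousAt_const.mul h2) ?_).continuousWithinAt
    exact mul_ne_zero (Real.sqrt_ne_zero'.mpr Real.pi_pos)
      (abs_ne_zero.mpr (Real.Gamma_ne_zero (hΓ s hs)))
  have hpos : ∀ s ∈ Icc (1 / 4 : ℝ) (1 / 2), 0 < fracC s := by
    intro s hs
    have := Real.Gamma_ne_zero (hΓ s hs)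
    have := Real.pi_pos
    have := Real.Gamma_pos_of_pos (s := 1 / 2 + s) (by linarith [hs.1])
    unfold fracC
    positivity
  have hne : (Icc (1 / 4 : ℝ) (1 / 2)).Nonempty := ⟨1 / 4, by norm_num⟩
  obtain ⟨a, ha, hmin⟩ := isCompact_Icc.exists_isMinOn hne hcont
  obtain ⟨b, hb, hmax⟩ := isCompact_Icc.exists_isMaxOn hne hcont
  exact ⟨fracC a, fracC b, hpos a ha, fun s hs => ⟨hmin hs, hmax hs⟩⟩

/-- An integrable majorant, uniform in `s ∈ [1/4, 1/2]`, of `min 1 h² / |h| ^ (1 + 2 s)`. -/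
noncomputable def kernelMajorant (h : ℝ) : ℝ := 4 * (1 + |h|) ^ (-(3 / 2) : ℝ)

lemma integrable_kernelMajorant : Integrable kernelMajorant := by
  have h := integrable_one_add_norm (E := ℝ) (μ := volume) (r := 3 / 2) (by norm_num)
  exact h.const_mul 4

lemma kernelMajorant_nonneg (h : ℝ) : 0 ≤ kernelMajorant h := by
  unfold kernelMajorant; positivity

lemma min_one_sq_div_le_kernelMajorant {s : ℝ} (hs : s ∈ Icc (1 / 4 : ℝ) (1 / 2)) {h : ℝ}
    (hh : h ≠ 0) : min 1 (h ^ 2) / |h| ^ (1 + 2 * s) ≤ kernelMajorant h := by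
  obtain ⟨hs1, hs2⟩ := hs
  have hpos : 0 < |h| := abs_pos.mpr hh
  have key : (4 : ℝ) * 2 ^ (-(3 / 2) : ℝ) ≥ 1 := by
    have : (2 : ℝ) ^ (-(2 : ℝ)) ≤ 2 ^ (-(3 / 2) : ℝ) :=
      Real.rpow_le_rpow_of_exponent_le (by norm_num) (by norm_num)
    rw [Real.rpow_neg (by norm_num)] at this
    norm_num at this ⊢
    linarith
  unfold kernelMajorant
  rcases le_total |h| 1 with h1 | h1
  · have hle : |h| ^ (2 : ℝ) ≤ |h| ^ (1 + 2 * s) :=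
      Real.rpow_le_rpow_of_exponent_ge hpos h1 (by linarith)
    have hA : min 1 (h ^ 2) / |h| ^ (1 + 2 * s) ≤ 1 := by
      rw [div_le_one (by positivity)]
      refine (min_le_right _ _).trans ?_
      rwa [← sq_abs, ← Real.rpow_natCast]
    have hB : (2 : ℝ) ^ (-(3 / 2) : ℝ) ≤ (1 + |h|) ^ (-(3 / 2) : ℝ) :=
      Real.rpow_le_rpow_of_nonpos (by positivity) (by linarith) (by norm_num)
    linarith
  · have hA : min 1 (h ^ 2) / |h| ^ (1 + 2 * s) ≤ |h| ^ (-(3 / 2) : ℝ) := by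
      rw [Real.rpow_neg hpos.le, ← one_div]
      refine div_le_div₀ (by norm_num) (min_le_left _ _) (by positivity) ?_
      exact Real.rpow_le_rpow_of_exponent_le h1 (by linarith)
    have hB : (2 * |h|) ^ (-(3 / 2) : ℝ) ≤ (1 + |h|) ^ (-(3 / 2) : ℝ) :=
      Real.rpow_le_rpow_of_nonpos (by positivity) (by linarith) (by norm_num)
    rw [Real.mul_rpow (by norm_num) hpos.le] at hB
    have : 0 ≤ |h| ^ (-(3 / 2) : ℝ) := by positivity
    nlinarith

/-- The cosine bump supported in `[-ρ, ρ]`. -/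
noncomputable def cosBump (ρ x : ℝ) : ℝ := cos (π / 2 * min 1 (|x| / ρ))

lemma cosBump_nonneg {ρ : ℝ} (hρ : 0 < ρ) (x : ℝ) : 0 ≤ cosBump ρ x := by
  have h0 : 0 ≤ min 1 (|x| / ρ) := by positivity
  have h1 : min 1 (|x| / ρ) ≤ 1 := min_le_left _ _
  have := Real.pi_pos
  exact Real.cos_nonneg_of_mem_Icc ⟨by nlinarith, by nlinarith⟩

lemma cosBump_le_one (ρ x : ℝ) : cosBump ρ x ≤ 1 := Real.cos_le_one _

lemma cosBump_eq_zero {ρ x : ℝ} (hρ : 0 < ρ) (h : ρ ≤ |x|) : cosBump ρ x = 0 := by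
  have : 1 ≤ |x| / ρ := by rwa [le_div_iff₀ hρ, one_mul]
  rw [cosBump, min_eq_left this, mul_one, Real.cos_pi_div_two]

lemma cosBump_eq_cos {ρ x : ℝ} (hρ : 0 < ρ) (h : |x| ≤ ρ) :
    cosBump ρ x = cos (π / (2 * ρ) * x) := by
  have : |x| / ρ ≤ 1 := by rwa [div_le_one hρ]
  rw [cosBump, min_eq_right this, ← Real.cos_abs (π / (2 * ρ) * x), abs_mul,
    abs_of_pos (a := π / (2 * ρ)) (by have := Real.pi_pos; positivity)]
  congr 1
  field_simp

lemma cos_le_cosBump {ρ x : ℝ} (hρ : 0 < ρ) (h : |x| ≤ 3 * ρ) :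
    cos (π / (2 * ρ) * x) ≤ cosBump ρ x := by
  rcases le_total |x| ρ with h1 | h1
  · exact (cosBump_eq_cos hρ h1).ge
  · rw [cosBump_eq_zero hρ h1, ← Real.cos_abs, abs_mul,
      abs_of_pos (a := π / (2 * ρ)) (by have := Real.pi_pos; positivity)]
    have e : π / (2 * ρ) * |x| = π / 2 * (|x| / ρ) := by field_simp
    have h2 : 1 ≤ |x| / ρ := by rwa [le_div_iff₀ hρ, one_mul]
    have h3 : |x| / ρ ≤ 3 := by rwa [div_le_iff₀ hρ]
    have := Real.pi_pos
    rw [e]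
    exact Real.cos_nonpos_of_pi_div_two_le_of_le (by nlinarith) (by nlinarith)

lemma pi_div_two_mul_le_one {ρ : ℝ} (hρ : 2 ≤ ρ) : π / (2 * ρ) ≤ 1 := by
  rw [div_le_one (by positivity)]
  linarith [Real.pi_le_four]

lemma cosBump_second_difference {ρ x : ℝ} (hρ : 2 ≤ ρ) (hx : |x| < ρ) (h : ℝ) :
    -(2 * cosBump ρ x * min 1 (h ^ 2)) ≤
      cosBump ρ (x + h) + cosBump ρ (x - h) - 2 * cosBump ρ x := by
  have hρ0 : 0 < ρ := by linarith
  have b0 := cosBump_nonneg hρ0 x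
  have b1 := cosBump_nonneg hρ0 (x + h)
  have b2 := cosBump_nonneg hρ0 (x - h)
  rcases le_total 1 (h ^ 2) with hh | hh
  · rw [min_eq_left hh]; linarith
  · rw [min_eq_right hh]
    have hh' : |h| ≤ 1 := by rwa [← sq_le_one_iff_abs_le_one]
    have c1 := cos_le_cosBump (x := x + h) hρ0 (by linarith [abs_add_le x h])
    have c2 := cos_le_cosBump (x := x - h) hρ0 (by linarith [abs_sub x h])
    set a := π / (2 * ρ) with ha
    have ha0 : 0 ≤ a := by have := Real.pi_pos; positivity
    have ha1 : a ≤ 1 := pi_div_two_mul_le_one hρ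
    have hc : 1 - (a * h) ^ 2 / 2 ≤ cos (a * h) := Real.one_sub_sq_div_two_le_cos
    have hsum : cos (a * (x + h)) + cos (a * (x - h)) = 2 * cosBump ρ x * cos (a * h) := by
      rw [cosBump_eq_cos hρ0 hx.le, mul_add, mul_sub, Real.cos_add, Real.cos_sub]
      ring
    have ha2 : a ^ 2 * h ^ 2 ≤ h ^ 2 := 
      mul_le_of_le_one_left (sq_nonneg h) (pow_le_one₀ ha0 ha1)
    nlinarith [mul_le_mul_of_nonneg_left hc b0, mul_le_mul_of_nonneg_left ha2 b0,
      mul_nonneg b0 (sq_nonneg h)]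

lemma integral_difference_quotient_ge {u φ W : ℝ → ℝ} {x p k : ℝ}
    (hquot : Integrable fun y : ℝ => (u x - u y) / |x - y| ^ p)
    (hφ : Integrable φ) (hW : Integrable W)
    (h : ∀ y : ℝ, y ≠ 0 → φ (x + y) + φ (x - y) - 2 * k * W y ≤
      (2 * u x - u (x + y) - u (x - y)) / |y| ^ p) :
    (∫ y, φ y) - k * ∫ y, W y ≤ ∫ y, (u x - u y) / |x - y| ^ p := by
  set f := fun y : ℝ => (u x - u y) / |x - y| ^ p with hf
  have i1 : Integrable fun y => f (x + y) := hquot.comp_add_left x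
  have i2 : Integrable fun y => f (x - y) := hquot.comp_sub_left x
  have j1 : Integrable fun y => φ (x + y) := hφ.comp_add_left x
  have j2 : Integrable fun y => φ (x - y) := hφ.comp_sub_left x
  have hle : ∫ y, (φ (x + y) + φ (x - y) - 2 * k * W y) ≤ ∫ y, (f (x + y) + f (x - y)) := by
    refine integral_mono_ae ((j1.add j2).sub (hW.const_mul _)) (i1.add i2) ?_
    have : ∀ᵐ y : ℝ, y ≠ 0 := by simp [ae_iff]
    filter_upwards [this] with y hy
    refine (h y hy).trans (le_of_eq ?_)
    simp only [hf, sub_add_cancel_left, abs_neg, sub_sub_cancel, ← add_div]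
    congr 1
    ring
  rw [integral_sub (f := fun y => φ (x + y) + φ (x - y)) (j1.add j2) (hW.const_mul _),
    integral_add j1 j2, integral_add i1 i2,
    integral_add_left_eq_self, integral_add_left_eq_self, integral_sub_left_eq_self,
    integral_sub_left_eq_self, integral_const_mul] at hle
  linarith

/-- A continuous cutoff, equal to `1` on `(-∞, 0]` and to `0` on `[1/2, ∞)`. -/
def cutoff (v : ℝ) : ℝ := max 0 (min 1 (1 - 2 * v))

lemma continuous_cutoff : Continuous cutoff := by unfold cutoff; fun_prop

lemma cutoff_nonneg (v : ℝ) : 0 ≤ cutoff v := le_max_left _ _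

lemma cutoff_le_one (v : ℝ) : cutoff v ≤ 1 := max_le zero_le_one (min_le_left _ _)

lemma cutoff_of_nonpos {v : ℝ} (hv : v ≤ 0) : cutoff v = 1 := by
  rw [cutoff, min_eq_left (by linarith), max_eq_right zero_le_one]

lemma cutoff_of_half_le {v : ℝ} (hv : 1 / 2 ≤ v) : cutoff v = 0 := by
  rw [cutoff, max_eq_left]
  exact (min_le_right _ _).trans (by linarith)

lemma fracLap_lower_bound {s c C : ℝ} (hs : s ∈ Icc (1 / 4 : ℝ) (1 / 2)) (hc0 : 0 ≤ c)
    (hc : c ≤ fracC s) (hC : fracC s ≤ C) {u : ℝ → ℝ} (hu : Continuous u) {ρ x m : ℝ}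
    (hρ : 2 ≤ ρ) (hρ5 : ρ ≤ 5) (hx : |x| < ρ) (hm0 : 0 ≤ m) (hm : m ≤ 1 / 4)
    (hquot : Integrable fun y : ℝ => (u x - u y) / |x - y| ^ (1 + 2 * s))
    (hmax : ∀ y, u y + m * cosBump ρ y ≤ u x + m * cosBump ρ x)
    (hone : 1 ≤ u x + m * cosBump ρ x) :
    c / 144 * (∫ y in Icc (-1 : ℝ) 1, cutoff (u y))
      - C * (∫ h, kernelMajorant h) * (m * cosBump ρ x) ≤ fracLap s u x := by
  have hρ0 : 0 < ρ := by linarith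
  have hb := cosBump_nonneg hρ0 x
  set φ : ℝ → ℝ := (Icc (-1 : ℝ) 1).indicator fun y => cutoff (u y) / 144 with hφ
  have hφi : Integrable φ := by
    rw [hφ, integrable_indicator_iff measurableSet_Icc]
    exact ((continuous_cutoff.comp hu).div_const 144).continuousOn.integrableOn_compact
      isCompact_Icc
  have hD : ∀ h : ℝ, h ≠ 0 → ∀ y, |x - y| = |h| →
      φ y ≤ (u x + m * cosBump ρ x - u y - m * cosBump ρ y) / |h| ^ (1 + 2 * s) := by
    intro h hh y hy
    have hpos : 0 < |h| := abs_pos.mpr hh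
    by_cases hyI : y ∈ Icc (-1 : ℝ) 1
    · rw [hφ, indicator_of_mem hyI, le_div_iff₀ (by positivity)]
      have hh6 : |h| ≤ 6 := by
        rw [← hy]
        have := abs_le.mpr hyI
        linarith [abs_sub x y]
      have hpow : |h| ^ (1 + 2 * s) ≤ 36 := by
        rcases le_total |h| 1 with h1 | h1
        · exact (Real.rpow_le_one hpos.le h1 (by linarith [hs.1])).trans (by norm_num)
        · refine (Real.rpow_le_rpow_of_exponent_le h1
            (show 1 + 2 * s ≤ (2 : ℕ) by push_cast; linarith [hs.2])).trans ?_
          rw [Real.rpow_natCast]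
          nlinarith
      have hcut := cutoff_nonneg (u y)
      have h4 : cutoff (u y) / 144 * |h| ^ (1 + 2 * s) ≤ cutoff (u y) / 4 := by
        nlinarith [mul_le_mul_of_nonneg_left hpow hcut]
      refine h4.trans ?_
      rcases le_total (1 / 2) (u y) with h2 | h2
      · rw [cutoff_of_half_le h2]; linarith [hmax y]
      · have := cutoff_le_one (u y)
        nlinarith [cosBump_le_one ρ y, cosBump_nonneg hρ0 y]
    · rw [hφ, indicator_of_notMem hyI]
      exact div_nonneg (by linarith [hmax y]) (by positivity)
  have key := integral_difference_quotient_ge (φ := φ) (W := kernelMajorant)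
    (k := m * cosBump ρ x) hquot hφi integrable_kernelMajorant (by
      intro h hh
      have d1 := hD h hh (x + h) (by simp)
      have d2 := hD h hh (x - h) (by simp)
      have hpos : 0 < |h| ^ (1 + 2 * s) := by
        have : 0 < |h| := abs_pos.mpr hh
        positivity
      have hk := min_one_sq_div_le_kernelMajorant hs hh
      have hs2 := cosBump_second_difference hρ hx h
      have hk2 := mul_le_mul_of_nonneg_left hk (mul_nonneg (mul_nonneg zero_le_two hm0) hb)
      have hs3 := div_le_div_of_nonneg_right (mul_le_mul_of_nonneg_left hs2 hm0) hpos.le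
      have e : (2 * u x - u (x + h) - u (x - h)) / |h| ^ (1 + 2 * s) =
          (u x + m * cosBump ρ x - u (x + h) - m * cosBump ρ (x + h)) / |h| ^ (1 + 2 * s)
          + (u x + m * cosBump ρ x - u (x - h) - m * cosBump ρ (x - h)) / |h| ^ (1 + 2 * s)
          + m * (cosBump ρ (x + h) + cosBump ρ (x - h) - 2 * cosBump ρ x)
            / |h| ^ (1 + 2 * s) := by
        rw [← add_div, ← add_div]; congr 1; ring
      have e2 : m * -(2 * cosBump ρ x * min 1 (h ^ 2)) / |h| ^ (1 + 2 * s) =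
          -(2 * m * cosBump ρ x * (min 1 (h ^ 2) / |h| ^ (1 + 2 * s))) := by ring
      rw [e]
      linarith)
  have hφint : ∫ y, φ y = (∫ y in Icc (-1 : ℝ) 1, cutoff (u y)) / 144 := by
    rw [hφ, integral_indicator measurableSet_Icc, integral_div]
  have hA : 0 ≤ ∫ y in Icc (-1 : ℝ) 1, cutoff (u y) :=
    integral_nonneg fun y => cutoff_nonneg _
  have hB : 0 ≤ ∫ h, kernelMajorant h := integral_nonneg kernelMajorant_nonneg
  rw [hφint] at key
  unfold fracLap
  have k1 := mul_le_mul_of_nonneg_left key (hc0.trans hc)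
  have k2 := mul_le_mul_of_nonneg_right hc hA
  have k3 := mul_le_mul_of_nonneg_right hC (mul_nonneg (mul_nonneg hm0 hb) hB)
  linarith

lemma HasDerivAt.nonneg_of_forall_Icc_le {f : ℝ → ℝ} {f' a t : ℝ} (hat : a < t)
    (hf : HasDerivAt f f' t) (h : ∀ τ ∈ Icc a t, f τ ≤ f t) : 0 ≤ f' := by
  have hs := (hasDerivWithinAt_iff_tendsto_slope' (s := Iio t) (by simp)).mp
    hf.hasDerivWithinAt
  refine ge_of_tendsto hs ?_
  filter_upwards [Ioo_mem_nhdsLT hat] with τ hτ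
  rw [slope_def_field]
  exact div_nonneg_of_nonpos (by linarith [h τ ⟨hτ.1.le, hτ.2.le⟩]) (by linarith [hτ.2])

lemma IsLocalMax.deriv_deriv_nonpos {f : ℝ → ℝ} {x : ℝ} (h : IsLocalMax f x)
    (hc : ContinuousAt f x) : deriv (deriv f) x ≤ 0 := by
  by_contra! hpos
  have hmin := isLocalMin_of_deriv_deriv_pos hpos h.deriv_eq_zero hc
  have heq : f =ᶠ[nhds x] fun _ => f x := by
    filter_upwards [h, hmin] with y h1 h2 using le_antisymm h1 h2
  have := heq.deriv.deriv_eq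
  simp at this
  linarith

lemma deriv_bounds_of_touching {u : ℝ → ℝ} {ρ x m : ℝ} (hρ : 0 < ρ) (hρ5 : ρ ≤ 5)
    (hx : |x| < ρ) (hmax : ∀ y, u y + m * cosBump ρ y ≤ u x + m * cosBump ρ x)
    (hd : ∀ y ∈ Icc (-5 : ℝ) 5, DifferentiableAt ℝ u y)
    (hdd : DifferentiableAt ℝ (deriv u) x) :
    deriv u x = m * (π / (2 * ρ) * sin (π / (2 * ρ) * x)) ∧
      deriv (deriv u) x ≤ m * ((π / (2 * ρ)) ^ 2 * cosBump ρ x) := by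
  set a := π / (2 * ρ) with ha
  have hnear : ∀ᶠ y in nhds x, |y| < ρ :=
    (continuous_abs.tendsto x).eventually (gt_mem_nhds hx)
  have hdu : ∀ᶠ y in nhds x, DifferentiableAt ℝ u y := by
    filter_upwards [hnear] with y hy using hd y (abs_le.mp (hy.le.trans hρ5))
  have hlin : ∀ y : ℝ, HasDerivAt (fun z => a * z) a y := fun y => by
    simpa using (hasDerivAt_id y).const_mul a
  have hcos : ∀ y, HasDerivAt (fun z => m * cos (a * z)) (m * (-sin (a * y) * a)) y :=
    fun y => (hlin y).cos.const_mul m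
  have hsin : HasDerivAt (fun y => m * (-sin (a * y) * a)) (m * (-(cos (a * x) * a) * a)) x :=
    (((hlin x).sin.neg).mul_const a).const_mul m
  have hF : ∀ y, DifferentiableAt ℝ u y →
      HasDerivAt (fun z => u z + m * cos (a * z)) (deriv u y + m * (-sin (a * y) * a)) y :=
    fun y hy => hy.hasDerivAt.add (hcos y)
  have hloc : IsLocalMax (fun z => u z + m * cos (a * z)) x := by
    filter_upwards [hnear] with y hy
    have := hmax y
    rwa [cosBump_eq_cos hρ hy.le, cosBump_eq_cos hρ hx.le] at this
  have hux := hdu.self_of_nhds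
  have h1 := hloc.hasDerivAt_eq_zero (hF x hux)
  have h2 := hloc.deriv_deriv_nonpos (hF x hux).continuousAt
  have h3 : deriv (fun z => u z + m * cos (a * z)) =ᶠ[nhds x]
      fun y => deriv u y + m * (-sin (a * y) * a) := by
    filter_upwards [hdu] with y hy using (hF y hy).deriv
  rw [h3.deriv_eq, (hdd.hasDerivAt.fun_add hsin).deriv] at h2
  rw [cosBump_eq_cos hρ hx.le]
  constructor <;> linarith

lemma drift_bound {N v ρ x : ℝ} (hN : 0 ≤ N) (hv : |v| ≤ N) (hρ : 2 ≤ ρ) (hx : |x| < ρ) :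
    -sin (π / (2 * ρ) * x) * (π / (2 * ρ) * (3 / 2 * N * x / ρ))
      - v * (π / (2 * ρ) * sin (π / (2 * ρ) * x)) ≤ 2 * N * cosBump ρ x := by
  wlog hx0 : 0 ≤ x generalizing x v
  · have := this (v := -v) (x := -x) (by rwa [abs_neg]) (by rwa [abs_neg]) (by linarith)
    rw [mul_neg, Real.sin_neg, cosBump, abs_neg, ← cosBump] at this
    refine le_trans (le_of_eq ?_) this
    ring
  have hρ0 : 0 < ρ := by linarith
  have hpi := Real.pi_pos
  rw [abs_of_nonneg hx0] at hx
  set a := π / (2 * ρ) with ha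
  have ha0 : 0 ≤ a := by positivity
  have ha1 : a ≤ 1 := pi_div_two_mul_le_one hρ
  have hz1 : x / ρ < 1 := by rwa [div_lt_one hρ0]
  have hz0 : 0 ≤ x / ρ := by positivity
  have hax : a * x = π / 2 * (x / ρ) := by rw [ha]; field_simp
  have hS0 : 0 ≤ sin (a * x) :=
    Real.sin_nonneg_of_nonneg_of_le_pi (by positivity) (by rw [hax]; nlinarith)
  have hS1 : sin (a * x) ≤ 1 := Real.sin_le_one _
  have hb := cosBump_nonneg hρ0 x
  have haS0 : 0 ≤ a * sin (a * x) := mul_nonneg ha0 hS0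
  have haS1 : a * sin (a * x) ≤ 1 := mul_le_one₀ ha1 hS0 hS1
  have h1 : -sin (a * x) * (a * (3 / 2 * N * x / ρ)) - v * (a * sin (a * x)) ≤
      a * sin (a * x) * (N * (1 - 3 / 2 * (x / ρ))) := by
    have e : -sin (a * x) * (a * (3 / 2 * N * x / ρ)) - v * (a * sin (a * x)) =
        a * sin (a * x) * (-v - N * (3 / 2 * (x / ρ))) := by ring
    rw [e]
    exact mul_le_mul_of_nonneg_left (by linarith [neg_le_of_abs_le hv]) haS0
  refine h1.trans ?_
  rcases le_total (2 / 3) (x / ρ) with h | h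
  · have : N * (1 - 3 / 2 * (x / ρ)) ≤ 0 := mul_nonpos_of_nonneg_of_nonpos hN (by linarith)
    exact (mul_nonpos_of_nonneg_of_nonpos haS0 this).trans (by positivity)
  · have hc : 1 / 2 ≤ cosBump ρ x := by
      rw [cosBump_eq_cos hρ0 (by rw [abs_of_nonneg hx0]; exact hx.le), ← ha, hax,
        ← Real.cos_pi_div_three]
      exact Real.cos_le_cos_of_nonneg_of_le_pi (by positivity) (by linarith) (by nlinarith)
    have h2 : N * (1 - 3 / 2 * (x / ρ)) ≤ N := mul_le_of_le_one_right hN (by linarith)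
    have h3 : 0 ≤ N * (1 - 3 / 2 * (x / ρ)) := mul_nonneg hN (by linarith)
    nlinarith [mul_le_of_le_one_left h3 haS1]

lemma exists_amplitude {g : ℝ → ℝ} (hg : Continuous g) (hg0 : ∀ t, 0 ≤ g t)
    (hg2 : ∀ t, g t ≤ 2) {K c : ℝ} (hK : 0 ≤ K) (hc : 0 ≤ c) (T : ℝ) :
    ∃ m : ℝ → ℝ, (∀ t, HasDerivAt m (c * g t - K * m t) t) ∧ m T = 0 ∧
      ∀ t, T ≤ t → 0 ≤ m t ∧ m t ≤ 2 * c * (t - T) ∧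
        ∀ r ∈ Icc T t, c * exp (-(K * (t - T))) * (∫ τ in T..r, g τ) ≤ m t := by
  have hq : Continuous fun τ => c * exp (K * τ) * g τ := by fun_prop
  have hq0 : ∀ τ, 0 ≤ c * exp (K * τ) * g τ := fun τ =>
    mul_nonneg (mul_nonneg hc (exp_pos _).le) (hg0 τ)
  refine ⟨fun t => exp (-(K * t)) * ∫ τ in T..t, c * exp (K * τ) * g τ, ?_, by simp, ?_⟩
  · intro t
    have h1 : HasDerivAt (fun t => exp (-(K * t))) (exp (-(K * t)) * -K) t := by
      have : HasDerivAt (fun t : ℝ => -(K * t)) (-K) t := by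
        simpa using ((hasDerivAt_id t).const_mul K).fun_neg
      exact this.exp
    have h2 := intervalIntegral.integral_hasDerivAt_right (hq.intervalIntegrable T t)
      (hq.stronglyMeasurableAtFilter _ _) hq.continuousAt
    refine (h1.fun_mul h2).congr_deriv ?_
    have : exp (-(K * t)) * exp (K * t) = 1 := by rw [← exp_add]; simp
    linear_combination (c * g t) * this
  · intro t ht
    have hexp : exp (-(K * t)) * exp (K * t) = 1 := by rw [← exp_add]; simp
    refine ⟨mul_nonneg (exp_pos _).le
      (intervalIntegral.integral_nonneg ht fun τ _ => hq0 τ), ?_, ?_⟩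
    · have : ∫ τ in T..t, c * exp (K * τ) * g τ ≤ ∫ _ in T..t, 2 * c * exp (K * t) := by
        refine intervalIntegral.integral_mono_on ht (hq.intervalIntegrable _ _) (by simp) ?_
        intro τ hτ
        have he : exp (K * τ) ≤ exp (K * t) :=
          exp_le_exp.mpr (mul_le_mul_of_nonneg_left hτ.2 hK)
        calc c * exp (K * τ) * g τ ≤ c * exp (K * t) * 2 := by
              gcongr
              · exact hg0 τ
              · exact hg2 τ
          _ = _ := by ring
      rw [intervalIntegral.integral_const, smul_eq_mul] at this
      calc exp (-(K * t)) * ∫ τ in T..t, c * exp (K * τ) * g τ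
          ≤ exp (-(K * t)) * ((t - T) * (2 * c * exp (K * t))) := by gcongr
        _ = 2 * c * (t - T) := by linear_combination (2 * c * (t - T)) * hexp
    · rintro r ⟨hr1, hr2⟩
      have h1 : ∫ τ in T..r, c * exp (K * T) * g τ ≤ ∫ τ in T..r, c * exp (K * τ) * g τ := by
        refine intervalIntegral.integral_mono_on hr1
          ((hg.const_mul _).intervalIntegrable _ _) (hq.intervalIntegrable _ _) ?_
        intro τ hτ
        have he : exp (K * T) ≤ exp (K * τ) :=
          exp_le_exp.mpr (mul_le_mul_of_nonneg_left hτ.1 hK)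
        have := hg0 τ
        gcongr
      have h2 : ∫ τ in T..r, c * exp (K * τ) * g τ ≤ ∫ τ in T..t, c * exp (K * τ) * g τ := by
        rw [← intervalIntegral.integral_add_adjacent_intervals (hq.intervalIntegrable T r)
          (hq.intervalIntegrable r t)]
        linarith [intervalIntegral.integral_nonneg (μ := volume) hr2 fun τ _ => hq0 τ]
      rw [intervalIntegral.integral_const_mul] at h1
      have he : exp (-(K * (t - T))) = exp (-(K * t)) * exp (K * T) := by
        rw [← exp_add]; congr 1; ring
      calc _ = exp (-(K * t)) * (c * exp (K * T) * ∫ τ in T..r, g τ) := by rw [he]; ring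
        _ ≤ exp (-(K * t)) * ∫ τ in T..t, c * exp (K * τ) * g τ := by
          gcongr
          exact h1.trans h2

lemma continuous_integral_cutoff {Θ : ℝ × ℝ → ℝ} (hΘ : Continuous Θ) :
    Continuous fun t => ∫ y in Icc (-1 : ℝ) 1, cutoff (Θ (y, t)) := by
  refine continuous_parametric_integral_of_continuous
    (f := fun t y => cutoff (Θ (y, t))) ?_ isCompact_Icc
  have : Continuous fun p : ℝ × ℝ => Θ (p.2, p.1) := by fun_prop
  exact continuous_cutoff.comp this

lemma integral_cutoff_le_two {Θ : ℝ × ℝ → ℝ} (hΘ : Continuous Θ) (t : ℝ) :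
    ∫ y in Icc (-1 : ℝ) 1, cutoff (Θ (y, t)) ≤ 2 := by
  have hc : Continuous fun y => cutoff (Θ (y, t)) := continuous_cutoff.comp (by fun_prop)
  have : ∫ y in Icc (-1 : ℝ) 1, cutoff (Θ (y, t)) ≤ ∫ _ in Icc (-1 : ℝ) 1, (1 : ℝ) :=
    setIntegral_mono (hc.continuousOn.integrableOn_compact isCompact_Icc) (by simp)
      fun y => cutoff_le_one _
  refine this.trans ?_
  norm_num

lemma le_integral_cutoff {Θ : ℝ × ℝ → ℝ} (hΘ : Continuous Θ) {T r μ : ℝ} (hTr : T ≤ r)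
    (hμ : ENNReal.ofReal μ ≤
      volume {p : ℝ × ℝ | p ∈ Icc (-1 : ℝ) 1 ×ˢ Icc T r ∧ Θ p ≤ 0}) :
    μ ≤ ∫ t in T..r, ∫ y in Icc (-1 : ℝ) 1, cutoff (Θ (y, t)) := by
  set A := {p : ℝ × ℝ | p ∈ Icc (-1 : ℝ) 1 ×ˢ Icc T r ∧ Θ p ≤ 0}
  have hcomp : IsCompact (Icc (-1 : ℝ) 1 ×ˢ Icc T r) := isCompact_Icc.prod isCompact_Icc
  have hAsub : A ⊆ Icc (-1 : ℝ) 1 ×ˢ Icc T r := fun p hp => hp.1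
  have hA : MeasurableSet A :=
    hcomp.measurableSet.inter (isClosed_le hΘ continuous_const).measurableSet
  have hfin : volume A ≠ ⊤ := ((measure_mono hAsub).trans_lt hcomp.measure_lt_top).ne
  have hc : Continuous fun p => cutoff (Θ p) := continuous_cutoff.comp hΘ
  have hquot : IntegrableOn (fun p => cutoff (Θ p)) (Icc (-1 : ℝ) 1 ×ˢ Icc T r) :=
    hc.continuousOn.integrableOn_compact hcomp
  have h1 : μ ≤ volume.real A := by
    rw [Measure.real, ← ENNReal.ofReal_le_iff_le_toReal hfin]; exact hμ
  have h2 : volume.real A = ∫ p in A, cutoff (Θ p) := by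
    rw [setIntegral_congr_fun hA (g := fun _ => (1 : ℝ)) fun p hp => cutoff_of_nonpos hp.2]
    simp
  have h3 : ∫ p in A, cutoff (Θ p) ≤ ∫ p in Icc (-1 : ℝ) 1 ×ˢ Icc T r, cutoff (Θ p) :=
    setIntegral_mono_set hquot (ae_of_all _ fun p => cutoff_nonneg _)
      (LE.le.eventuallyLE hAsub)
  have h4 : ∫ p in Icc (-1 : ℝ) 1 ×ˢ Icc T r, cutoff (Θ p) =
      ∫ t in Icc T r, ∫ y in Icc (-1 : ℝ) 1, cutoff (Θ (y, t)) := by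
    rw [IntegrableOn, Measure.volume_eq_prod, ← Measure.prod_restrict] at hquot
    rw [Measure.volume_eq_prod, ← Measure.prod_restrict, integral_prod_symm _ hquot]
  rw [intervalIntegral.integral_of_le hTr, ← integral_Icc_eq_integral_Ioc]
  linarith

lemma hasDerivAt_phase {N t : ℝ} (x : ℝ) (ht : 0 < 2 - 3 / 2 * N * t) :
    HasDerivAt (fun t => π / (2 * (2 - 3 / 2 * N * t)) * x)
      (π / (2 * (2 - 3 / 2 * N * t)) * (3 / 2 * N * x / (2 - 3 / 2 * N * t))) t := by
  have h1 : HasDerivAt (fun t => 2 * (2 - 3 / 2 * N * t)) (2 * -(3 / 2 * N)) t := by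
    simpa using (((hasDerivAt_id t).const_mul (3 / 2 * N)).const_sub 2).const_mul 2
  refine (((hasDerivAt_const t π).fun_div h1 (by positivity)).mul_const x).congr_deriv ?_
  generalize 2 - 3 / 2 * N * t = r at ht ⊢
  field_simp
  ring

set_option maxHeartbeats 1000000 in
/-- the measure-to-pointwise-estimate lemma. If a subsolution is `≤ 1`
everywhere and nonpositive on a set of measure at least `μ` inside
`[-1,1] × [-2/M₀, -1/M₀]`, then it is `≤ 1 - lam` on `[-1,1] × [-1/M₀, 0]`. -/
theorem measure_to_point_estimate (M₀ μ : ℝ) (hM₀ : 2 ≤ M₀) (hμ : 0 < μ) :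
    ∃ ε₀ lam : ℝ, 0 < ε₀ ∧ 0 < lam ∧
      ∀ s M ε₁ : ℝ, s ∈ Set.Icc (1 / 4 : ℝ) (1 / 2) → |M| ≤ M₀ →
        0 < ε₁ → ε₁ ≤ (10 : ℝ) ^ ((3 : ℝ) / 2) →
        ∀ θ : ℝ → ℝ → ℝ,
        -- bounded and continuous on ℝ × [-2/M₀, 0]
        (∃ B : ℝ, ∀ x : ℝ, ∀ t ∈ Set.Icc (-(2 / M₀)) 0, |θ x t| ≤ B) →
        ContinuousOn (fun p : ℝ × ℝ => θ p.1 p.2)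
          (Set.univ ×ˢ Set.Icc (-(2 / M₀)) 0) →
        -- continuously differentiable in t and twice continuously differentiable in x
        -- on [-5,5] × [-2/M₀, 0]
        (∀ p ∈ Set.Icc (-5 : ℝ) 5 ×ˢ Set.Icc (-(2 / M₀)) 0,
          DifferentiableAt ℝ (fun t => θ p.1 t) p.2) →
        ContinuousOn (fun p : ℝ × ℝ => deriv (fun t => θ p.1 t) p.2)
          (Set.Icc (-5 : ℝ) 5 ×ˢ Set.Icc (-(2 / M₀)) 0) →
        (∀ p ∈ Set.Icc (-5 : ℝ) 5 ×ˢ Set.Icc (-(2 / M₀)) 0,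
          DifferentiableAt ℝ (fun x => θ x p.2) p.1) →
        (∀ p ∈ Set.Icc (-5 : ℝ) 5 ×ˢ Set.Icc (-(2 / M₀)) 0,
          DifferentiableAt ℝ (deriv fun x => θ x p.2) p.1) →
        ContinuousOn (fun p : ℝ × ℝ => deriv (fun x => θ x p.2) p.1)
          (Set.Icc (-5 : ℝ) 5 ×ˢ Set.Icc (-(2 / M₀)) 0) →
        ContinuousOn (fun p : ℝ × ℝ => deriv (deriv fun x => θ x p.2) p.1)
          (Set.Icc (-5 : ℝ) 5 ×ˢ Set.Icc (-(2 / M₀)) 0) →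
        -- the fractional Laplacian is given by an absolutely convergent integral
        (∀ p ∈ Set.Icc (-5 : ℝ) 5 ×ˢ Set.Icc (-(2 / M₀)) 0,
          Integrable fun y : ℝ => (θ p.1 p.2 - θ y p.2) / |p.1 - y| ^ (1 + 2 * s)) →
        -- θ ≤ 1 on ℝ × [-2/M₀, 0]
        (∀ x : ℝ, ∀ t ∈ Set.Icc (-(2 / M₀)) 0, θ x t ≤ 1) →
        -- the subsolution inequality on [-5,5] × [-2/M₀, 0]
        (∀ p ∈ Set.Icc (-5 : ℝ) 5 ×ˢ Set.Icc (-(2 / M₀)) 0,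
          deriv (fun t => θ p.1 t) p.2
            + M * θ p.1 p.2 * deriv (fun x => θ x p.2) p.1
            + fracLap s (fun x => θ x p.2) p.1
            - ε₁ * deriv (deriv fun x => θ x p.2) p.1 ≤ ε₀) →
        -- measure assumption
        ENNReal.ofReal μ ≤
          volume {p : ℝ × ℝ |
            p ∈ Set.Icc (-1 : ℝ) 1 ×ˢ Set.Icc (-(2 / M₀)) (-(1 / M₀)) ∧
            θ p.1 p.2 ≤ 0} →
        ∀ x ∈ Set.Icc (-1 : ℝ) 1, ∀ t ∈ Set.Icc (-(1 / M₀)) 0,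
          θ x t ≤ 1 - lam := by
  obtain ⟨c₁, C, hc₁, hcC⟩ := exists_fracC_bounds
  set c := min c₁ 18 with hc_def
  have hc : 0 < c := lt_min hc₁ (by norm_num)
  have hc18 : c ≤ 18 := min_le_right _ _
  have hM0 : 0 < M₀ := by linarith
  set I := ∫ h, kernelMajorant h with hI
  have hI0 : 0 ≤ I := integral_nonneg kernelMajorant_nonneg
  have hC0 : 0 ≤ C := by
    obtain ⟨h1, h2⟩ := hcC (1 / 2) (by norm_num)
    linarith
  set K := 2 * M₀ + C * I + 100 with hK
  have hK0 : 0 ≤ K := by positivity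
  set κ := c / 144 * exp (-(K * 1)) * μ with hκ
  have hκ0 : 0 < κ := by positivity
  refine ⟨κ / 8, κ / 4, by positivity, by positivity, ?_⟩
  intro s M ε₁ hs hM hε₁ hε₁' θ _ hcont hdt _ hdx hdxx _ _ hquot hone hsub hmeas
  obtain ⟨hcs, hCs⟩ := hcC s hs
  replace hcs : c ≤ fracC s := (min_le_left _ _).trans hcs
  have hε100 : ε₁ ≤ 100 := by
    refine hε₁'.trans ((Real.rpow_le_rpow_of_exponent_le (by norm_num)
      (show (3 : ℝ) / 2 ≤ (2 : ℕ) by norm_num)).trans ?_)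
    rw [Real.rpow_natCast]
    norm_num
  set T := -(2 / M₀) with hT
  have hTM : 2 / M₀ = 2 * (1 / M₀) := by ring
  have hinv : 0 < 1 / M₀ := by positivity
  have hinv2 : 1 / M₀ ≤ 1 / 2 := one_div_le_one_div_of_le (by norm_num) hM₀
  have hT0 : T ≤ 0 := by linarith
  have hT1 : -1 ≤ T := by linarith
  have hMT : M₀ * T = -2 := by rw [hT]; field_simp
  -- the solution extended in time by its values at the end points
  set Θ : ℝ × ℝ → ℝ := fun p => θ p.1 (max T (min 0 p.2)) with hΘ
  have hclamp : ∀ t ∈ Icc T 0, max T (min 0 t) = t := fun t ht => by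
    rw [min_eq_right ht.2, max_eq_right ht.1]
  have hΘc : Continuous Θ := by
    refine hcont.comp_continuous (f := fun p : ℝ × ℝ => (p.1, max T (min 0 p.2)))
      (by fun_prop) fun p => ⟨mem_univ _, le_max_left _ _, max_le hT0 (min_le_left _ _)⟩
  have hμg := le_integral_cutoff hΘc (T := T) (r := -(1 / M₀)) (μ := μ) (by linarith) (by
    refine hmeas.trans (measure_mono ?_)
    rintro p ⟨hp, hp0⟩
    refine ⟨hp, ?_⟩
    rw [hΘ]
    dsimp only
    rwa [hclamp p.2 ⟨hp.2.1, by linarith [hp.2.2]⟩])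
  obtain ⟨m, hm', hmT, hm⟩ := exists_amplitude (continuous_integral_cutoff hΘc)
    (fun t => integral_nonneg fun y => cutoff_nonneg _) (integral_cutoff_le_two hΘc)
    hK0 (show 0 ≤ c / 144 by positivity) T
  set ρ : ℝ → ℝ := fun t => 2 - 3 / 2 * M₀ * t with hρ
  have hρ2 : ∀ t ∈ Icc T 0, 2 ≤ ρ t := fun t ht => by
    simp only [hρ]; nlinarith [ht.2]
  have hρ5 : ∀ t ∈ Icc T 0, ρ t ≤ 5 := fun t ht => by
    simp only [hρ]; nlinarith [ht.1]
  have hm4 : ∀ t ∈ Icc T 0, m t ≤ 1 / 4 := fun t ht => by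
    refine (hm t ht.1).2.1.trans ?_
    nlinarith [ht.1, ht.2]
  have hbarrier : ∀ x ∈ Icc (-5 : ℝ) 5, ∀ t ∈ Icc T 0,
      θ x t + m t * cosBump (ρ t) x - κ / 4 * (t - T) ≤ 1 := by
    set f : ℝ × ℝ → ℝ :=
      fun p => θ p.1 p.2 + m p.2 * cosBump (ρ p.2) p.1 - κ / 4 * (p.2 - T) with hf
    have hmc : Continuous m := continuous_iff_continuousAt.mpr fun t => (hm' t).continuousAt
    have hbc : ContinuousOn (fun p : ℝ × ℝ => cosBump (ρ p.2) p.1)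
        (Icc (-5 : ℝ) 5 ×ˢ Icc T 0) := by
      unfold cosBump
      refine Real.continuous_cos.comp_continuousOn (continuousOn_const.mul
        ((continuous_const.min continuous_id).comp_continuousOn ?_))
      refine ContinuousOn.div (by fun_prop) (by simp only [hρ]; fun_prop) fun p hp => ?_
      linarith [hρ2 p.2 hp.2]
    have hfc : ContinuousOn f (Icc (-5 : ℝ) 5 ×ˢ Icc T 0) := by
      refine ((hcont.mono fun p hp => ⟨mem_univ _, hp.2⟩).add
        ((hmc.comp continuous_snd).continuousOn.mul hbc)).sub (by fun_prop)
    obtain ⟨⟨x₀, t₀⟩, hp₀, hmax⟩ := (isCompact_Icc.prod isCompact_Icc).exists_isMaxOn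
      (s := Icc (-5 : ℝ) 5 ×ˢ Icc T 0) ⟨(0, 0), by simp [hT0]⟩ hfc
    intro x hx t ht
    refine (hmax (mk_mem_prod hx ht) : f (x, t) ≤ f (x₀, t₀)).trans ?_
    by_contra! hgt
    obtain ⟨hx₀, ht₀⟩ := hp₀
    simp only at hx₀ ht₀
    have hgt' : 1 < θ x₀ t₀ + m t₀ * cosBump (ρ t₀) x₀ - κ / 4 * (t₀ - T) := hgt
    have hρt2 := hρ2 t₀ ht₀
    have hρt5 := hρ5 t₀ ht₀
    have hρt0 : 0 < ρ t₀ := by linarith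
    have hb0 := cosBump_nonneg hρt0 x₀
    have hb1 := cosBump_le_one (ρ t₀) x₀
    have hmt0 := (hm t₀ ht₀.1).1
    have hmt4 := hm4 t₀ ht₀
    have hθ1 := hone x₀ t₀ ht₀
    have hpen : 0 ≤ κ / 4 * (t₀ - T) := mul_nonneg (by positivity) (by linarith [ht₀.1])
    have hxρ : |x₀| < ρ t₀ := by
      by_contra! h
      rw [cosBump_eq_zero hρt0 h] at hgt'
      linarith
    have htT : T < t₀ := by
      refine lt_of_le_of_ne ht₀.1 fun h => ?_
      rw [← h, hmT] at hgt'
      rw [← h] at hθ1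
      linarith
    have hmaxy : ∀ y, θ y t₀ + m t₀ * cosBump (ρ t₀) y ≤
        θ x₀ t₀ + m t₀ * cosBump (ρ t₀) x₀ := by
      intro y
      by_cases hy : y ∈ Icc (-5 : ℝ) 5
      · have : f (y, t₀) ≤ f (x₀, t₀) := hmax (mk_mem_prod hy ht₀)
        simp only [hf] at this
        linarith
      · have hy5 : 5 ≤ |y| := by
          by_contra! h
          exact hy (abs_le.mp h.le)
        rw [cosBump_eq_zero hρt0 (hρt5.trans hy5)]
        linarith [hone y t₀ ht₀]
    have hu : Continuous fun y => θ y t₀ :=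
      hcont.comp_continuous (f := fun y : ℝ => (y, t₀)) (by fun_prop)
        fun y => ⟨mem_univ _, ht₀⟩
    have hFL := fracLap_lower_bound hs hc.le hcs hCs hu hρt2 hρt5 hxρ hmt0 hmt4
      (hquot (x₀, t₀) ⟨hx₀, ht₀⟩) hmaxy (by linarith)
    obtain ⟨hX, hXX⟩ := deriv_bounds_of_touching hρt0 hρt5 hxρ hmaxy
      (fun y hy => hdx (y, t₀) ⟨hy, ht₀⟩) (hdxx (x₀, t₀) ⟨hx₀, ht₀⟩)
    have hv : |M * θ x₀ t₀| ≤ M₀ := by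
      rw [abs_mul]
      have : |θ x₀ t₀| ≤ 1 := abs_le.mpr ⟨by nlinarith, hθ1⟩
      nlinarith [abs_nonneg M, abs_nonneg (θ x₀ t₀)]
    have hdrift := drift_bound hM0.le hv hρt2 hxρ
    have hρ' : HasDerivAt (fun t => π / (2 * ρ t) * x₀)
        (π / (2 * ρ t₀) * (3 / 2 * M₀ * x₀ / ρ t₀)) t₀ :=
      hasDerivAt_phase x₀ hρt0
    have hG := (((hdt (x₀, t₀) ⟨hx₀, ht₀⟩).hasDerivAt).fun_add
      ((hm' t₀).fun_mul hρ'.cos)).fun_sub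
      (((hasDerivAt_id t₀).sub_const T).const_mul (κ / 4))
    have hGt := hG.nonneg_of_forall_Icc_le htT (by
      intro τ hτ
      have hτ' : τ ∈ Icc T 0 := ⟨hτ.1, hτ.2.trans ht₀.2⟩
      have hρτ : ρ t₀ ≤ ρ τ := by simp only [hρ]; nlinarith [hτ.2]
      have : f (x₀, τ) ≤ f (x₀, t₀) := hmax (mk_mem_prod hx₀ hτ')
      simp only [hf] at this
      rwa [cosBump_eq_cos hρt0 hxρ.le,
        cosBump_eq_cos (by linarith) (hxρ.le.trans hρτ)] at this)
    have hs' := hsub (x₀, t₀) ⟨hx₀, ht₀⟩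
    simp only at hs' hGt hX hXX
    rw [← cosBump_eq_cos hρt0 hxρ.le] at hGt
    have hg : ∫ y in Icc (-1 : ℝ) 1, cutoff (Θ (y, t₀)) =
        ∫ y in Icc (-1 : ℝ) 1, cutoff (θ y t₀) := by
      simp only [hΘ, hclamp t₀ ht₀]
    rw [hg] at hGt
    have hg0 : 0 ≤ ∫ y in Icc (-1 : ℝ) 1, cutoff (θ y t₀) :=
      integral_nonneg fun y => cutoff_nonneg _
    set G := ∫ y in Icc (-1 : ℝ) 1, cutoff (θ y t₀)
    set a := π / (2 * ρ t₀)
    set b := cosBump (ρ t₀) x₀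
    have ha0 : 0 ≤ a := by have := Real.pi_pos; positivity
    have ha1 : a ^ 2 ≤ 1 := pow_le_one₀ ha0 (pi_div_two_mul_le_one hρt2)
    have hmb : 0 ≤ m t₀ * b := mul_nonneg hmt0 hb0
    have hvisc : ε₁ * deriv (deriv fun x => θ x t₀) x₀ ≤ 100 * (m t₀ * b) := by
      refine (mul_le_mul_of_nonneg_left hXX hε₁.le).trans ?_
      have h1 : m t₀ * (a ^ 2 * b) ≤ m t₀ * b := by nlinarith
      have h2 : 0 ≤ m t₀ * (a ^ 2 * b) := by positivity
      nlinarith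
    have hdrift' := mul_le_mul_of_nonneg_left hdrift hmt0
    have hGb : 0 ≤ c / 144 * G * (1 - b) := mul_nonneg (by positivity) (by linarith)
    rw [hX] at hs'
    rw [hK] at hGt
    linarith
  intro x hx t ht
  have htT : t ∈ Icc T 0 := ⟨by linarith [ht.1], ht.2⟩
  have h1 := hbarrier x ⟨by linarith [hx.1], by linarith [hx.2]⟩ t htT
  have h2 := (hm t htT.1).2.2 (-(1 / M₀)) ⟨by linarith, ht.1⟩
  have hκm : κ ≤ m t := by
    refine le_trans ?_ h2
    rw [hκ]
    have : exp (-(K * 1)) ≤ exp (-(K * (t - T))) := by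
      refine exp_le_exp.mpr (neg_le_neg (mul_le_mul_of_nonneg_left ?_ hK0))
      linarith [ht.2]
    gcongr
  have hb : 1 / 2 ≤ cosBump (ρ t) x := by
    have hρt := hρ2 t htT
    have hz : |x| / ρ t ≤ 1 / 2 := by
      rw [div_le_iff₀ (by linarith)]
      linarith [abs_le.mpr hx]
    have hpi := Real.pi_pos
    have hz0 : 0 ≤ |x| / ρ t := by positivity
    rw [cosBump, min_eq_right (by linarith), ← Real.cos_pi_div_three]
    exact Real.cos_le_cos_of_nonneg_of_le_pi (by positivity) (by linarith) (by nlinarith)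
  have h3 : κ * (1 / 2) ≤ m t * cosBump (ρ t) x :=
    mul_le_mul hκm hb (by norm_num) (hm t htT.1).1
  have h4 : κ / 4 * (t - T) ≤ κ / 4 * 1 := by
    gcongr
    linarith [ht.2]
  linarith
end
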